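/- Let R be a Noetherian commutative ring and let x ∈ R be an element such that R is x-adically complete. Let M be an R-module that is derived x-complete and such that the quotient M/xM is a finitely generated R-module. Then M is a finitely generated R-module. -/

import Mathlib

/-- An `R`-module `M` is *derived `x`-complete* if the endomorphism
`Φ_x : ∏_{n ∈ ℕ} M → ∏_{n ∈ ℕ} M`, `(m_n)_n ↦ (m_n − x • m_{n+1})_n`, is bijective. -/
def IsDerivedComplete (R : Type*) [CommRing R] (x : R)
    (M : Type*) [AddCommGroup M] [Module R M] : Prop :=
  Function.Bijective (fun f : ℕ → M => fun n => f n - x • f (n + 1))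

theorem exists_phi_preimage {R : Type*} [CommRing R] (x : R)
    [IsAdicComplete (Ideal.span {x}) R] (r : ℕ → R) :
    ∃ s : ℕ → R, ∀ n, s n - x * s (n + 1) = r n := by
  have key : ∀ n, ∃ L : R, ∀ N, x ^ N ∣ (∑ k ∈ Finset.range N, x ^ k * r (n + k)) - L := by
    intro n
    obtain ⟨L, hL⟩ := IsPrecomplete.prec (I := Ideal.span {x}) (M := R) inferInstance
      (f := fun N => ∑ k ∈ Finset.range N, x ^ k * r (n + k)) (by
        intro a b hab
        rw [SModEq.comm, SModEq.sub_mem, smul_eq_mul, Ideal.mul_top, Ideal.span_singleton_pow,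
          Ideal.mem_span_singleton, ← Finset.sum_Ico_eq_sub _ hab]
        refine Finset.dvd_sum fun k hk => ?_
        exact Dvd.dvd.mul_right (pow_dvd_pow x (Finset.mem_Ico.1 hk).1) _)
    refine ⟨L, fun N => ?_⟩
    have := hL N
    rwa [SModEq.sub_mem, smul_eq_mul, Ideal.mul_top, Ideal.span_singleton_pow,
          Ideal.mem_span_singleton] at this
  choose s hs using key
  refine ⟨s, fun n => ?_⟩
  rw [← sub_eq_zero]
  refine IsHausdorff.haus (I := Ideal.span {x}) (M := R) inferInstance _ fun N => ?_
  rw [SModEq.sub_mem, smul_eq_mul, Ideal.mul_top, Ideal.span_singleton_pow,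
          Ideal.mem_span_singleton, sub_zero]
  have h1 := (pow_dvd_pow x (Nat.le_succ N)).trans (hs n (N + 1))
  have h2 := (hs (n + 1) N).mul_left x
  have e : ∑ k ∈ Finset.range (N + 1), x ^ k * r (n + k)
      = x * (∑ k ∈ Finset.range N, x ^ k * r (n + 1 + k)) + r n := by
    rw [Finset.sum_range_succ', Finset.mul_sum]
    simp only [pow_zero, one_mul, add_zero]
    congr 1
    refine Finset.sum_congr rfl fun k _ => ?_
    rw [show n + (k + 1) = n + 1 + k by ring]; ring
  have h3 := dvd_sub h2 h1
  rw [e] at h3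
  convert h3 using 1
  ring

/-- Let `R` be a Noetherian commutative ring and `x ∈ R` such that `R` is `x`-adically
complete.  If `M` is a derived `x`-complete `R`-module such that `M/xM` is finitely
generated, then `M` is finitely generated. -/
theorem finite_of_isDerivedComplete_of_finite_quotient
    {R : Type*} [CommRing R] [IsNoetherianRing R] (x : R)
    [IsAdicComplete (Ideal.span {x}) R]
    (M : Type*) [AddCommGroup M] [Module R M]
    (hM : IsDerivedComplete R x M)
    (hfg : Module.Finite R (M ⧸ (Ideal.span {x} • (⊤ : Submodule R M)))) :
    Module.Finite R M := by
  obtain ⟨k, q, hq⟩ := Module.Finite.exists_fin (R := R)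
    (M := M ⧸ (Ideal.span {x} • (⊤ : Submodule R M)))
  choose t ht using fun i => Submodule.Quotient.mk_surjective _ (q i)
  have step : ∀ m : M, ∃ (c : Fin k → R) (m' : M), m - x • m' = ∑ i, c i • t i := by
    intro m
    have hm : (Submodule.Quotient.mk m : M ⧸ (Ideal.span {x} • (⊤ : Submodule R M))) ∈
        Submodule.span R (Set.range q) := by rw [hq]; trivial
    obtain ⟨c, hc⟩ := (Submodule.mem_span_range_iff_exists_fun R).1 hm
    have h : (Submodule.Quotient.mk m : M ⧸ (Ideal.span {x} • (⊤ : Submodule R M))) =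
        Submodule.Quotient.mk (∑ i, c i • t i) := by
      rw [← hc, ← Submodule.mkQ_apply, map_sum]
      simp [ht]
    rw [Submodule.Quotient.eq, Submodule.ideal_span_singleton_smul,
      Submodule.mem_smul_pointwise_iff_exists] at h
    obtain ⟨m', -, h⟩ := h
    exact ⟨c, m', by rw [h]; abel⟩
  choose c nx hstep using step
  classical
  refine ⟨⟨Finset.univ.image t, ?_⟩⟩
  rw [eq_top_iff]
  intro m _
  let f : ℕ → M := fun n => nx^[n] m
  choose s hs using fun i => exists_phi_preimage x (fun n => c (f n) i)
  have hf : f = fun n => ∑ i, s i n • t i := by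
    apply hM.1
    funext n
    have e : f (n + 1) = nx (f n) := Function.iterate_succ_apply' nx n m
    simp only [e, hstep, Finset.smul_sum, ← Finset.sum_sub_distrib]
    refine Finset.sum_congr rfl fun i _ => ?_
    rw [← hs i n, sub_smul, mul_smul]
  have h0 : m = ∑ i, s i 0 • t i := congrFun hf 0
  rw [h0]
  exact Submodule.sum_mem _ fun i _ => Submodule.smul_mem _ _ (Submodule.subset_span (by simp))
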